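/- For every ordinal α < ε₀, the function F^⋄_{ε₀} eventually dominates F_α: there is a natural number N such that F_α(n) ≤ F^⋄_{ε₀}(n) for all n ≥ N. -/

import Mathlib

/-!
The function `F^⋄_{ε₀}` evaluates at `n` the function `F_{ω_{k+1}}`, where `k = F_{ε₀}⁻¹(n)` tends
to infinity with `n`. The theorem therefore follows from two comparisons between members of the
fast-growing hierarchy: for `α < ω_{m+1}` the function `F_α` is eventually dominated by
`F_{ω_{m+1}}`, and `F_{ω_{m+1}}(n) ≤ F_{ω_{k+1}}(n)` holds for *every* `n` when `m ≤ k`. The second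
one has no exceptional arguments, which is essential since `k` depends on `n`.

Both are obtained from the step-down relation `α →ₙ β`, which implies `F_β(n) ≤ F_α(n)`
(`fgh_le_of_stepDown`) because every `F_α` satisfies `x < F_α(x)`.

* Step-down sequences can be performed behind a Cantor normal form (`stepDown_add`) and lifted to
  exponents (`stepDown_opow`). Lifting `ω →ₙ 1` repeatedly gives `ω_{m+1} →ₙ ω_m` for all `n`.
* Fundamental sequences are cofinal (`exists_lt_fundSeq`) and satisfy the Bachmann property
  `{α}(y) →_y {α}(x)` for `x ≤ y` (`stepDown_fundSeq_fundSeq`). By induction on `α`, every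
  `β < α < ε₀` satisfies `α →ₙ β` for all large `n` (`eventually_stepDown`).
-/

open Ordinal
open scoped Classical

noncomputable section

/-- `omegaTower m α` is `ω_m^α`: the `m`-fold iterated `ω`-power tower on top of `α`. -/
noncomputable def omegaTower : ℕ → Ordinal.{0} → Ordinal.{0}
  | 0, α => α
  | m + 1, α => omega0 ^ (omegaTower m α)

/-- `ε₀`, the least ordinal `ε` with `ω ^ ε = ε`. -/
noncomputable def eps0 : Ordinal.{0} := Ordinal.nfp (fun a => omega0 ^ a) 0

/-- The fundamental sequence `{α}(n)` for ordinals below `ε₀`: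
`{0}(n) = 0`, `{β+1}(n) = β`, and for a limit `α = β + ω^γ·(k+1)` (with `γ > 0` the least
exponent of the Cantor normal form) we set `{α}(n) = β + ω^γ·k + ω^δ·(n+1)` if `γ = δ+1`
and `{α}(n) = β + ω^γ·k + ω^{{γ}(n)}` if `γ` is a limit.  Here `γ` is recovered as the
largest exponent with `ω^γ ∣ α`, and `β + ω^γ·k = ω^γ · pred (α / ω^γ)`. -/
noncomputable def fundSeq (α : Ordinal.{0}) (n : ℕ) : Ordinal.{0} :=
  if _h0 : α = 0 then 0
  else if hs : ∃ β, α = β + 1 then Classical.choose hs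
  else
    let γ : Ordinal := sSup {c : Ordinal | omega0 ^ c ∣ α}
    if hγ : ∃ δ, γ = δ + 1 then
      omega0 ^ γ * Ordinal.pred (α / omega0 ^ γ) +
        omega0 ^ (Classical.choose hγ) * ((n : Ordinal) + 1)
    else if hlt : γ < α then
      omega0 ^ γ * Ordinal.pred (α / omega0 ^ γ) + omega0 ^ (fundSeq γ n)
    else 0
termination_by α
decreasing_by exact hlt

/-- The step-down relation `β →_n γ`: there is a finite sequence from `β` to `γ`
each step of which descends to the `n`-th member of the fundamental sequence. -/
def stepDown (n : ℕ) (β γ : Ordinal.{0}) : Prop :=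
  Relation.ReflTransGen (fun a b => fundSeq a n = b) β γ

/-- The fast-growing hierarchy `F_α` for `α < ε₀`:
`F_0(x) = x+1`, `F_{α+1}(x) = F_α^[x+1](x)`, `F_λ(x) = F_{{λ}(x)}(x)` for limits. -/
noncomputable def fgh (α : Ordinal.{0}) : ℕ → ℕ :=
  if _h0 : α = 0 then fun x => x + 1
  else if hs : ∃ β, α = β + 1 then fun x => (fgh (Classical.choose hs))^[x + 1] x
  else fun x => if hlt : fundSeq α x < α then fgh (fundSeq α x) x else 0
termination_by α
decreasing_by
  · calc Classical.choose hs < Classical.choose hs + 1 := by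
          rw [Ordinal.add_one_eq_succ]; exact Order.lt_succ _
      _ = α := (Classical.choose_spec hs).symm
  · exact hlt

/-- `F_{ε₀}(x) := F_{ω_{x+1}}(x)`. -/
noncomputable def Feps0 (x : ℕ) : ℕ := fgh (omegaTower (x + 1) 1) x

/-- The inverse `F_{ε₀}^{-1}(x) := max({z ≤ x : F_{ε₀}(z) ≤ x} ∪ {0})`. -/
noncomputable def Feps0Inv (x : ℕ) : ℕ :=
  sSup ({z : ℕ | z ≤ x ∧ Feps0 z ≤ x} ∪ {0})

/-- The slow function `F^⋄_{ε₀}(x) := F_{ω_{F_{ε₀}^{-1}(x)+1}}(x)`. -/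
noncomputable def slowFeps0 (x : ℕ) : ℕ := fgh (omegaTower (Feps0Inv x + 1) 1) x

/-- The slow hierarchy `F^⋄_{ε₀+α}` for `α < ε₀`:
`F^⋄_{ε₀+0} = F^⋄_{ε₀}`, `F^⋄_{ε₀+α+1}(n) = (F^⋄_{ε₀+α})^[n+1](n)`, and
`F^⋄_{ε₀+λ}(n) = F^⋄_{ε₀+{λ}(n)}(n)` for limits `λ`. -/
noncomputable def slowF (α : Ordinal.{0}) : ℕ → ℕ :=
  if _h0 : α = 0 then slowFeps0
  else if hs : ∃ β, α = β + 1 then fun n => (slowF (Classical.choose hs))^[n + 1] n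
  else fun n => if hlt : fundSeq α n < α then slowF (fundSeq α n) n else 0
termination_by α
decreasing_by
  · calc Classical.choose hs < Classical.choose hs + 1 := by
          rw [Ordinal.add_one_eq_succ]; exact Order.lt_succ _
      _ = α := (Classical.choose_spec hs).symm
  · exact hlt

/-- A nonempty finite set of naturals is *large* if its cardinality is at least
its minimum. -/
def IsLargeSet (Y : Finset ℕ) : Prop := ∃ hY : Y.Nonempty, Y.min' hY ≤ Y.card

/-- The Paris–Harrington statement `PH(k, m, n, N)`: every `k`-colouring of the
`n`-element subsets of `{0, …, N-1}` admits a large homogeneous set with at least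
`m` elements. -/
def PH (k m n N : ℕ) : Prop :=
  ∀ f : Finset ℕ → Fin k,
    ∃ Y : Finset ℕ, Y ⊆ Finset.range N ∧ m ≤ Y.card ∧ IsLargeSet Y ∧
      ∀ s t : Finset ℕ, s ⊆ Y → t ⊆ Y → s.card = n → t.card = n → f s = f t

/-- `σ(n, k)`: the least `N` such that every `k`-colouring of the `n`-element subsets of
`{0, …, N-1}` admits a large homogeneous set with at least `n+1` elements. -/
noncomputable def sigmaPH (n k : ℕ) : ℕ := sInf {N | PH k (n + 1) n N}

/-! ### Ordinals below `ε₀` -/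

theorem lt_opow_self_of_lt_eps0 {γ : Ordinal.{0}} (h : γ < eps0) : γ < ω ^ γ := by
  refine lt_of_le_of_ne (right_le_opow γ one_lt_omega0) fun he => ?_
  exact absurd h (not_lt.2 (nfp_le_fp (fun a b hab => opow_le_opow_right omega0_pos hab)
    zero_le he.symm.le))

theorem omegaTower_succ_eq_iterate (m : ℕ) :
    omegaTower m 1 = (fun a => omega0 ^ a)^[m + 1] 0 := by
  induction m with
  | zero => simp [omegaTower]
  | succ k ih => rw [omegaTower, ih, Function.iterate_succ_apply' _ (k + 1)]

theorem exists_lt_omegaTower {α : Ordinal.{0}} (h : α < eps0) : ∃ m, α < omegaTower (m + 1) 1 := by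
  obtain ⟨n, hn⟩ := lt_nfp_iff.1 h
  have hle : ∀ a : Ordinal.{0}, a ≤ ω ^ a := fun a => right_le_opow a one_lt_omega0
  refine ⟨n, hn.trans_le ?_⟩
  rw [omegaTower_succ_eq_iterate, Function.iterate_succ_apply', Function.iterate_succ_apply']
  exact (hle _).trans (hle _)

theorem omegaTower_lt_eps0 (m : ℕ) : omegaTower m 1 < eps0 := by
  rw [omegaTower_succ_eq_iterate]
  refine iterate_lt_nfp (fun a b hab => ?_) (by simp) _
  exact (opow_lt_opow_iff_right one_lt_omega0).2 hab

/-- Every nonzero ordinal is `ω ^ γ * (ξ + 1)`, where `γ` is the least exponent of its Cantor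
normal form. -/
theorem exists_opow_mul_succ (α : Ordinal.{0}) (h0 : α ≠ 0) :
    ∃ γ ξ : Ordinal.{0}, α = ω ^ γ * (ξ + 1) := by
  induction α using WellFoundedLT.induction with
  | ind α ih =>
  set l := log ω α
  have hdm : ω ^ l * (α / ω ^ l) + α % ω ^ l = α := div_add_mod α (ω ^ l)
  by_cases hr : α % ω ^ l = 0
  · obtain ⟨k, hk⟩ := lt_omega0.1 (div_opow_log_lt α one_lt_omega0)
    have hpos := div_opow_log_pos ω h0
    rw [hk] at hpos
    obtain ⟨j, rfl⟩ : ∃ j, k = j + 1 := Nat.exists_eq_succ_of_ne_zero (by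
      rintro rfl; simp at hpos)
    refine ⟨l, j, ?_⟩
    rw [hr, hk] at hdm
    simpa using hdm.symm
  · obtain ⟨γ, ξ, hξ⟩ := ih _ (mod_opow_log_lt_self ω h0) hr
    have hγl : γ ≤ l := by
      have h1 : ω ^ γ ≤ α % ω ^ l := by
        rw [hξ]; exact le_mul_left _ (by simp)
      have h2 : ω ^ γ < ω ^ l := h1.trans_lt (mod_lt _ (opow_ne_zero _ omega0_ne_zero))
      exact ((opow_lt_opow_iff_right one_lt_omega0).1 h2).le
    obtain ⟨ζ, hζ⟩ := opow_dvd_opow ω hγl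
    refine ⟨γ, ζ * (α / ω ^ l) + ξ, ?_⟩
    rw [add_assoc, mul_add, ← mul_assoc, ← hζ, ← hξ, hdm]

theorem opow_le_opow_mul_succ (γ ξ : Ordinal.{0}) : ω ^ γ ≤ ω ^ γ * (ξ + 1) :=
  le_mul_left _ (by simp)

/-- Below `ε₀` the least exponent `γ` is smaller than `α`, which makes induction on `α` available
for it. -/
theorem exists_decomp {α : Ordinal.{0}} (h0 : α ≠ 0) (h : α < eps0) :
    ∃ γ ξ : Ordinal.{0}, α = ω ^ γ * (ξ + 1) ∧ γ < α ∧ γ < ω ^ γ := by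
  obtain ⟨γ, ξ, hξ⟩ := exists_opow_mul_succ α h0
  have h1 : ω ^ γ ≤ α := hξ ▸ opow_le_opow_mul_succ γ ξ
  have h2 := lt_opow_self_of_lt_eps0 (((right_le_opow γ one_lt_omega0).trans h1).trans_lt h)
  exact ⟨γ, ξ, hξ, h2.trans_le h1, h2⟩

theorem zero_succ_limit (γ : Ordinal.{0}) :
    γ = 0 ∨ (∃ δ, γ = δ + 1) ∨ Order.IsSuccLimit γ := by
  rcases zero_or_succ_or_isSuccLimit γ with h | ⟨δ, h⟩ | h
  · exact .inl h
  · exact .inr (.inl ⟨δ, by rw [← h, Order.succ_eq_add_one]⟩)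
  · exact .inr (.inr h)

theorem not_exists_succ_of_limit {γ : Ordinal.{0}} (h : Order.IsSuccLimit γ) :
    ¬ ∃ δ, γ = δ + 1 := by
  rintro ⟨δ, rfl⟩
  have := h.isSuccPrelimit
  rw [← Order.succ_eq_add_one] at this
  exact Order.not_isSuccPrelimit_succ δ this

/-! ### Fundamental sequences -/

theorem fundSeq_zero (n : ℕ) : fundSeq 0 n = 0 := by
  rw [fundSeq]; simp

theorem fundSeq_add_one (β : Ordinal.{0}) (n : ℕ) : fundSeq (β + 1) n = β := by
  have hs : ∃ β', β + 1 = β' + 1 := ⟨β, rfl⟩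
  rw [fundSeq, dif_neg (by simp), dif_pos hs]
  have := Classical.choose_spec hs
  exact (Order.add_one_inj.1 this).symm

/-- The exponent that `fundSeq` extracts from `ω ^ γ * (ξ + 1)` is `γ`: if `ω ^ (γ + 1)` divided
it, then `ω` would divide the successor `ξ + 1`. -/
theorem sSup_dvd (γ ξ : Ordinal.{0}) :
    sSup {c : Ordinal.{0} | ω ^ c ∣ ω ^ γ * (ξ + 1)} = γ := by
  refine IsGreatest.csSup_eq ⟨Dvd.intro _ rfl, fun c hc => ?_⟩
  by_contra! hlt
  obtain ⟨η, hη⟩ := (opow_dvd_opow ω (Order.add_one_le_of_lt hlt)).trans hc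
  rw [opow_add_one, mul_assoc] at hη
  have h := mul_left_cancel₀ (opow_ne_zero γ omega0_ne_zero) hη
  have hlim : Order.IsSuccLimit (ξ + 1) := isSuccLimit_iff.2 ⟨by simp, isSuccPrelimit_iff_omega0_dvd.2 ⟨η, h⟩⟩
  exact not_exists_succ_of_limit hlim ⟨ξ, rfl⟩

theorem not_succ_opow_mul {γ : Ordinal.{0}} (h : γ ≠ 0) (ξ : Ordinal.{0}) :
    ¬ ∃ β, ω ^ γ * (ξ + 1) = β + 1 := by
  apply not_exists_succ_of_limit
  refine isSuccLimit_iff.2 ⟨mul_ne_zero (opow_ne_zero _ omega0_ne_zero) (by simp),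
    isSuccPrelimit_iff_omega0_dvd.2 (Dvd.dvd.mul_right ?_ _)⟩
  simpa using opow_dvd_opow ω (Order.one_le_iff_pos.2 (pos_iff_ne_zero.2 h))

theorem fundSeq_opow_succ_mul (δ ξ : Ordinal.{0}) (n : ℕ) :
    fundSeq (ω ^ (δ + 1) * (ξ + 1)) n = ω ^ (δ + 1) * ξ + ω ^ δ * ((n : Ordinal) + 1) := by
  have hs : ∃ δ', δ + 1 = δ' + 1 := ⟨δ, rfl⟩
  have hc : Classical.choose hs = δ := (Order.add_one_inj.1 (Classical.choose_spec hs)).symm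
  have h0 : ω ^ (δ + 1) * (ξ + 1) ≠ 0 := mul_ne_zero (opow_ne_zero _ omega0_ne_zero) (by simp)
  rw [fundSeq, dif_neg h0, dif_neg (not_succ_opow_mul (by simp) ξ)]
  simp only [sSup_dvd]
  rw [dif_pos hs, hc, mul_div_cancel _ (opow_ne_zero _ omega0_ne_zero), pred_add_one]

theorem fundSeq_opow_limit_mul {γ : Ordinal.{0}} (hγ : Order.IsSuccLimit γ) (hlt : γ < ω ^ γ)
    (ξ : Ordinal.{0}) (n : ℕ) :
    fundSeq (ω ^ γ * (ξ + 1)) n = ω ^ γ * ξ + ω ^ fundSeq γ n := by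
  have h0 : ω ^ γ * (ξ + 1) ≠ 0 := mul_ne_zero (opow_ne_zero _ omega0_ne_zero) (by simp)
  have hγ0 : γ ≠ 0 := (isSuccLimit_iff.1 hγ).1
  rw [fundSeq, dif_neg h0, dif_neg (not_succ_opow_mul hγ0 ξ)]
  simp only [sSup_dvd]
  rw [dif_neg (not_exists_succ_of_limit hγ), dif_pos (hlt.trans_le (opow_le_opow_mul_succ γ ξ)),
    mul_div_cancel _ (opow_ne_zero _ omega0_ne_zero), pred_add_one]

theorem fundSeq_opow_succ (δ : Ordinal.{0}) (n : ℕ) :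
    fundSeq (ω ^ (δ + 1)) n = ω ^ δ * ((n : Ordinal) + 1) := by
  simpa using fundSeq_opow_succ_mul δ 0 n

theorem fundSeq_opow_limit {γ : Ordinal.{0}} (hγ : Order.IsSuccLimit γ) (hlt : γ < ω ^ γ) (n : ℕ) :
    fundSeq (ω ^ γ) n = ω ^ fundSeq γ n := by
  simpa using fundSeq_opow_limit_mul hγ hlt 0 n

/-- Only the last term of the Cantor normal form is affected by taking fundamental sequences. -/
theorem fundSeq_opow_mul_succ {γ : Ordinal.{0}} (hlt : γ < ω ^ γ) (ξ : Ordinal.{0}) (n : ℕ) :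
    fundSeq (ω ^ γ * (ξ + 1)) n = ω ^ γ * ξ + fundSeq (ω ^ γ) n := by
  rcases zero_succ_limit γ with rfl | ⟨δ, rfl⟩ | hγ
  · have h1 : fundSeq 1 n = 0 := by simpa using fundSeq_add_one 0 n
    simp [fundSeq_add_one, h1]
  · rw [fundSeq_opow_succ_mul, fundSeq_opow_succ]
  · rw [fundSeq_opow_limit_mul hγ hlt, fundSeq_opow_limit hγ hlt]

theorem opow_mul_nat_succ_lt (δ : Ordinal.{0}) (n : ℕ) :
    ω ^ δ * ((n : Ordinal) + 1) < ω ^ (δ + 1) := by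
  have := opow_mul_lt_opow (natCast_lt_omega0 (n + 1)) (Order.lt_add_one_iff.2 (le_refl δ))
  simpa using this

theorem fundSeq_lt {α : Ordinal.{0}} (h0 : α ≠ 0) (h : α < eps0) (n : ℕ) : fundSeq α n < α := by
  induction α using WellFoundedLT.induction with
  | ind α ih =>
  obtain ⟨γ, ξ, hξ, hγα, hγ⟩ := exists_decomp h0 h
  have key : fundSeq (ω ^ γ) n < ω ^ γ := by
    rcases zero_succ_limit γ with rfl | ⟨δ, rfl⟩ | hl
    · have h1 : fundSeq 1 n = 0 := by simpa using fundSeq_add_one 0 n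
      simp [h1]
    · rw [fundSeq_opow_succ]; exact opow_mul_nat_succ_lt δ n
    · rw [fundSeq_opow_limit hl hγ, opow_lt_opow_iff_right one_lt_omega0]
      exact ih γ hγα (isSuccLimit_iff.1 hl).1 (hγα.trans h)
  rw [hξ, fundSeq_opow_mul_succ hγ, mul_add, mul_one]
  gcongr

theorem fundSeq_le {α : Ordinal.{0}} (h : α < eps0) (n : ℕ) : fundSeq α n ≤ α := by
  by_cases h0 : α = 0
  · rw [h0, fundSeq_zero]
  · exact (fundSeq_lt h0 h n).le

/-- The fundamental sequence of a limit ordinal is cofinal in it. -/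
theorem exists_lt_fundSeq {α β : Ordinal.{0}} (hα : Order.IsSuccLimit α) (h : α < eps0)
    (hβ : β < α) : ∃ n, β < fundSeq α n := by
  induction α using WellFoundedLT.induction generalizing β with
  | ind α ih =>
  obtain ⟨γ, ξ, hξ, hγα, hγ⟩ := exists_decomp (isSuccLimit_iff.1 hα).1 h
  have key : ∀ c < ω ^ γ, ∃ n, c < fundSeq (ω ^ γ) n := by
    intro c hc
    rcases zero_succ_limit γ with rfl | ⟨δ, rfl⟩ | hl
    · exact absurd ⟨ξ, by simpa using hξ⟩ (not_exists_succ_of_limit hα)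
    · rw [← Order.succ_eq_add_one] at hc
      obtain ⟨n, hn⟩ := lt_omega0_opow_succ.1 hc
      refine ⟨n, hn.trans_le ?_⟩
      rw [fundSeq_opow_succ]
      gcongr
      exact (Order.lt_add_one_iff.2 le_rfl).le
    · obtain ⟨γ', hγ', hc'⟩ := (lt_opow_of_isSuccLimit omega0_ne_zero hl).1 hc
      obtain ⟨n, hn⟩ := ih γ hγα hl (hγα.trans h) hγ'
      refine ⟨n, hc'.trans ?_⟩
      rwa [fundSeq_opow_limit hl hγ, opow_lt_opow_iff_right one_lt_omega0]
  rw [hξ, mul_add, mul_one] at hβ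
  obtain ⟨c, hc, hβc⟩ := (lt_add_iff (opow_ne_zero γ omega0_ne_zero)).1 hβ
  obtain ⟨n, hn⟩ := key c hc
  refine ⟨n, hβc.trans_lt ?_⟩
  rw [hξ, fundSeq_opow_mul_succ hγ]
  gcongr

/-! ### The step-down relation -/

theorem stepDown.trans {n : ℕ} {α β γ : Ordinal.{0}} (h₁ : stepDown n α β)
    (h₂ : stepDown n β γ) : stepDown n α γ :=
  Relation.ReflTransGen.trans h₁ h₂

theorem stepDown_fundSeq (α : Ordinal.{0}) (n : ℕ) : stepDown n α (fundSeq α n) :=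
  Relation.ReflTransGen.single rfl

theorem stepDown_zero {α : Ordinal.{0}} (h : α < eps0) (n : ℕ) : stepDown n α 0 := by
  induction α using WellFoundedLT.induction with
  | ind α ih =>
  by_cases h0 : α = 0
  · subst h0; exact .refl
  · have hlt := fundSeq_lt h0 h n
    exact (stepDown_fundSeq α n).trans (ih _ hlt (hlt.trans h))

/-- Step-down sequences of `ρ` may be carried out behind a summand `ω ^ γ * ξ`, as long as
`ω ^ γ * ξ + ρ` is obtained by juxtaposing Cantor normal forms. -/
theorem stepDown_add {γ ρ σ : Ordinal.{0}} {n : ℕ} (hs : stepDown n ρ σ) (ξ : Ordinal.{0})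
    (hρ : ρ < eps0) (hργ : ρ < ω ^ (γ + 1)) :
    stepDown n (ω ^ γ * ξ + ρ) (ω ^ γ * ξ + σ) := by
  induction hs using Relation.ReflTransGen.head_induction_on with
  | refl => exact .refl
  | @head ρ ρ' h _ ih =>
    subst h
    have hle := fundSeq_le hρ n
    refine stepDown.trans ?_ (ih (hle.trans_lt hρ) (hle.trans_lt hργ))
    by_cases h0 : ρ = 0
    · rw [h0, fundSeq_zero]; exact Relation.ReflTransGen.refl
    obtain ⟨δ, η, hη, -, hδ⟩ := exists_decomp h0 hρ
    have hδγ : δ ≤ γ := by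
      have : ω ^ δ < ω ^ (γ + 1) := (hη ▸ opow_le_opow_mul_succ δ η).trans_lt hργ
      exact Order.lt_add_one_iff.1 ((opow_lt_opow_iff_right one_lt_omega0).1 this)
    obtain ⟨ζ, hζ⟩ := (opow_dvd_opow ω hδγ).trans (Dvd.intro ξ rfl)
    refine Relation.ReflTransGen.single ?_
    rw [hη, hζ, ← mul_add, ← add_assoc, fundSeq_opow_mul_succ hδ, fundSeq_opow_mul_succ hδ,
      mul_add, add_assoc]

theorem stepDown_mul_nat {γ : Ordinal.{0}} (h : ω ^ γ < eps0) (n : ℕ) {j k : ℕ} (hjk : j ≤ k) :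
    stepDown n (ω ^ γ * (k : Ordinal)) (ω ^ γ * (j : Ordinal)) := by
  induction k, hjk using Nat.le_induction with
  | base => exact .refl
  | succ k _ ih =>
    refine stepDown.trans ?_ ih
    have hlt : ω ^ γ < ω ^ (γ + 1) :=
      (opow_lt_opow_iff_right one_lt_omega0).2 (Order.lt_add_one_iff.2 le_rfl)
    have := stepDown_add (stepDown_zero h n) (k : Ordinal) h hlt
    simpa [mul_add] using this

theorem opow_lt_eps0 {γ : Ordinal.{0}} (h : γ < eps0) : ω ^ γ < eps0 :=
  (apply_lt_nfp (isNormal_opow one_lt_omega0)).2 h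

/-- Step-down sequences lift to exponents. At a successor exponent the single step `δ + 1 →ₙ δ`
becomes `ω ^ (δ + 1) →ₙ ω ^ δ * (n + 1) →ₙ ω ^ δ`. -/
theorem stepDown_opow {γ δ : Ordinal.{0}} {n : ℕ} (hs : stepDown n γ δ) (h : γ < eps0) :
    stepDown n (ω ^ γ) (ω ^ δ) := by
  induction hs using Relation.ReflTransGen.head_induction_on with
  | refl => exact .refl
  | @head γ γ' hstep _ ih =>
    subst hstep
    refine stepDown.trans ?_ (ih ((fundSeq_le h n).trans_lt h))
    rcases zero_succ_limit γ with rfl | ⟨δ, rfl⟩ | hl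
    · rw [fundSeq_zero]; exact Relation.ReflTransGen.refl
    · have h1 := stepDown_fundSeq (ω ^ (δ + 1)) n
      rw [fundSeq_opow_succ] at h1
      rw [fundSeq_add_one]
      have hδ : δ < eps0 := (Order.lt_add_one_iff.2 le_rfl).trans h
      refine stepDown.trans h1 ?_
      simpa using stepDown_mul_nat (opow_lt_eps0 hδ) n (Nat.le_add_left 1 n)
    · rw [← fundSeq_opow_limit hl (lt_opow_self_of_lt_eps0 h)]
      exact stepDown_fundSeq _ n

/-- The Bachmann property of the fundamental sequences. -/
theorem stepDown_fundSeq_fundSeq {α : Ordinal.{0}} (h : α < eps0) {x y : ℕ} (hxy : x ≤ y) :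
    stepDown y (fundSeq α y) (fundSeq α x) := by
  induction α using WellFoundedLT.induction with
  | ind α ih =>
  by_cases h0 : α = 0
  · rw [h0, fundSeq_zero, fundSeq_zero]; exact .refl
  obtain ⟨γ, ξ, hξ, hγα, hγ⟩ := exists_decomp h0 h
  have hγe : γ < eps0 := hγα.trans h
  have hωγ := opow_lt_eps0 hγe
  have key : stepDown y (fundSeq (ω ^ γ) y) (fundSeq (ω ^ γ) x) := by
    rcases zero_succ_limit γ with rfl | ⟨δ, rfl⟩ | hl
    · have h1 : ∀ n, fundSeq 1 n = 0 := fun n => by simpa using fundSeq_add_one 0 n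
      simp only [opow_zero, h1]; exact .refl
    · rw [fundSeq_opow_succ, fundSeq_opow_succ]
      have hδ : δ < eps0 := (Order.lt_add_one_iff.2 le_rfl).trans hγe
      simpa using stepDown_mul_nat (opow_lt_eps0 hδ) y (Nat.succ_le_succ hxy)
    · rw [fundSeq_opow_limit hl hγ, fundSeq_opow_limit hl hγ]
      exact stepDown_opow (ih γ hγα hγe) ((fundSeq_le hγe y).trans_lt hγe)
  rw [hξ, fundSeq_opow_mul_succ hγ, fundSeq_opow_mul_succ hγ]
  have hle := fundSeq_le hωγ y
  refine stepDown_add key ξ (hle.trans_lt hωγ) (hle.trans_lt ?_)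
  exact (opow_lt_opow_iff_right one_lt_omega0).2 (Order.lt_add_one_iff.2 le_rfl)

/-- If `β < α < ε₀`, then `α` steps down to `β` along all sufficiently large arguments. For a
limit `α`, cofinality gives `β < {α}(m)` for some `m`, and the Bachmann property gives
`α →ₙ {α}(n) →ₙ {α}(m)` for all `n ≥ m`. -/
theorem eventually_stepDown {α β : Ordinal.{0}} (h : α < eps0) (hβ : β < α) :
    ∃ N, ∀ n, N ≤ n → stepDown n α β := by
  induction α using WellFoundedLT.induction with
  | ind α ih =>
  rcases zero_succ_limit α with rfl | ⟨δ, rfl⟩ | hl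
  · exact absurd hβ not_lt_zero
  · have hδ : δ < δ + 1 := Order.lt_add_one_iff.2 le_rfl
    have hstep : ∀ n, stepDown n (δ + 1) δ := fun n => by
      simpa only [fundSeq_add_one] using stepDown_fundSeq (δ + 1) n
    rcases (Order.lt_add_one_iff.1 hβ).eq_or_lt with rfl | hlt
    · exact ⟨0, fun n _ => hstep n⟩
    · obtain ⟨N, hN⟩ := ih δ hδ (hδ.trans h) hlt
      exact ⟨N, fun n hn => (hstep n).trans (hN n hn)⟩
  · obtain ⟨m, hm⟩ := exists_lt_fundSeq hl h hβ
    have hlt := fundSeq_lt (isSuccLimit_iff.1 hl).1 h m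
    obtain ⟨N, hN⟩ := ih _ hlt (hlt.trans h) hm
    refine ⟨max N m, fun n hn => ?_⟩
    exact ((stepDown_fundSeq α n).trans
      (stepDown_fundSeq_fundSeq h ((le_max_right _ _).trans hn))).trans
      (hN n ((le_max_left _ _).trans hn))

theorem stepDown_omegaTower_succ (m n : ℕ) :
    stepDown n (omegaTower (m + 1) 1) (omegaTower m 1) := by
  induction m with
  | zero =>
    have h1 := stepDown_fundSeq (ω ^ ((0 : Ordinal) + 1)) n
    rw [fundSeq_opow_succ] at h1
    have h2 := stepDown_mul_nat (opow_lt_eps0 (omegaTower_lt_eps0 0 |>.trans_le' zero_le)) n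
      (Nat.le_add_left 1 n)
    simp only [omegaTower]
    simpa using h1.trans (by simpa using h2)
  | succ k ih => exact stepDown_opow ih (omegaTower_lt_eps0 _)

theorem stepDown_omegaTower {m k : ℕ} (hmk : m ≤ k) (n : ℕ) :
    stepDown n (omegaTower k 1) (omegaTower m 1) := by
  induction k, hmk using Nat.le_induction with
  | base => exact .refl
  | succ k _ ih => exact (stepDown_omegaTower_succ k n).trans ih

/-! ### The fast-growing hierarchy -/

theorem fgh_zero (x : ℕ) : fgh 0 x = x + 1 := by
  rw [fgh]; simp

theorem fgh_add_one (β : Ordinal.{0}) (x : ℕ) : fgh (β + 1) x = (fgh β)^[x + 1] x := by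
  have hs : ∃ β', β + 1 = β' + 1 := ⟨β, rfl⟩
  have hc : Classical.choose hs = β := (Order.add_one_inj.1 (Classical.choose_spec hs)).symm
  rw [fgh, dif_neg (by simp), dif_pos hs, hc]

theorem fgh_limit {α : Ordinal.{0}} (hl : Order.IsSuccLimit α) (h : α < eps0) (x : ℕ) :
    fgh α x = fgh (fundSeq α x) x := by
  have h0 := (isSuccLimit_iff.1 hl).1
  rw [fgh, dif_neg h0, dif_neg (not_exists_succ_of_limit hl), dif_pos (fundSeq_lt h0 h x)]

theorem lt_fgh {α : Ordinal.{0}} (h : α < eps0) (x : ℕ) : x < fgh α x := by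
  induction α using WellFoundedLT.induction generalizing x with
  | ind α ih =>
  rcases zero_succ_limit α with rfl | ⟨δ, rfl⟩ | hl
  · rw [fgh_zero]; exact Nat.lt_succ_self x
  · have hδ : δ < δ + 1 := Order.lt_add_one_iff.2 le_rfl
    have hi := ih δ hδ (hδ.trans h)
    rw [fgh_add_one, Function.iterate_succ_apply']
    exact (Function.id_le_iterate_of_id_le (fun y => (hi y).le) x x).trans_lt (hi _)
  · rw [fgh_limit hl h]
    have hlt := fundSeq_lt (isSuccLimit_iff.1 hl).1 h x
    exact ih _ hlt (hlt.trans h) x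

/-- At a limit ordinal a step leaves the value at `n` unchanged; at a successor `δ + 1` it drops
all but one of the iterations of the inflationary function `fgh δ`. -/
theorem fgh_le_of_stepDown {α β : Ordinal.{0}} {n : ℕ} (hs : stepDown n α β) (h : α < eps0) :
    fgh β n ≤ fgh α n := by
  induction hs using Relation.ReflTransGen.head_induction_on with
  | refl => exact le_rfl
  | @head α α' hstep _ ih =>
    subst hstep
    refine (ih ((fundSeq_le h n).trans_lt h)).trans ?_
    rcases zero_succ_limit α with rfl | ⟨δ, rfl⟩ | hl
    · rw [fundSeq_zero]
    · have hδ : δ < eps0 := (Order.lt_add_one_iff.2 le_rfl).trans h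
      rw [fundSeq_add_one, fgh_add_one, Function.iterate_succ_apply]
      exact Function.id_le_iterate_of_id_le (fun y => (lt_fgh hδ y).le) n _
    · exact (fgh_limit hl h n).ge

theorem le_Feps0Inv {m n : ℕ} (hm : m ≤ n) (hF : Feps0 m ≤ n) : m ≤ Feps0Inv n := by
  refine le_csSup ⟨n, ?_⟩ (.inl ⟨hm, hF⟩)
  rintro z (hz | hz)
  · exact hz.1
  · exact hz ▸ Nat.zero_le n

/-- For every ordinal `α < ε₀`, the function `F^⋄_{ε₀}` eventually dominates `F_α`. -/
theorem stmt9 : ∀ α : Ordinal.{0}, α < eps0 →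
    ∃ N : ℕ, ∀ n : ℕ, N ≤ n → fgh α n ≤ slowFeps0 n := by
  intro α hα
  obtain ⟨m, hm⟩ := exists_lt_omegaTower hα
  obtain ⟨N, hN⟩ := eventually_stepDown (omegaTower_lt_eps0 (m + 1)) hm
  refine ⟨max N (max m (Feps0 m)), fun n hn => ?_⟩
  simp only [max_le_iff] at hn
  obtain ⟨hn1, hn2, hn3⟩ := hn
  have hk : m + 1 ≤ Feps0Inv n + 1 := Nat.succ_le_succ (le_Feps0Inv hn2 hn3)
  exact (fgh_le_of_stepDown (hN n hn1) (omegaTower_lt_eps0 _)).trans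
    (fgh_le_of_stepDown (stepDown_omegaTower hk n) (omegaTower_lt_eps0 _))

end
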